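/- arXiv:1402.4594 — 3 statements merged into one kernel-verified Lean document; each statement's English description precedes it below -/
import Mathlib

section
/- For n ≥ 3, the ring of invariants of S_n acting on the quotient polynomial ring F_2[x_1,...,x_n]/(x_1 + ... + x_n) is the polynomial algebra generated by the images of the elementary symmetric polynomials w_2, ..., w_n; in particular these images are algebraically independent and generate the full invariant ring. -/
open MvPolynomial

/-- The ideal of `F_2[x_1, …, x_n]` generated by `x_1 + ⋯ + x_n`. -/
noncomputable def sumIdeal (n : ℕ) : Ideal (MvPolynomial (Fin n) (ZMod 2)) :=
  Ideal.span {∑ i : Fin n, X i}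

/-- The action of a permutation `σ ∈ S_n` on the quotient ring
`F_2[x_1, …, x_n]/(x_1 + ⋯ + x_n)`, descended from permuting the variables. -/
noncomputable def quotAct (n : ℕ) (σ : Equiv.Perm (Fin n)) :
    MvPolynomial (Fin n) (ZMod 2) ⧸ sumIdeal n →+*
      MvPolynomial (Fin n) (ZMod 2) ⧸ sumIdeal n :=
  Ideal.quotientMap (sumIdeal n) (rename σ).toRingHom (by
    rw [sumIdeal, Ideal.span_le]
    intro x hx
    simp only [Set.mem_singleton_iff] at hx
    subst hx
    simp only [SetLike.mem_coe, Ideal.mem_comap, AlgHom.toRingHom_eq_coe,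
      RingHom.coe_coe, map_sum, rename_X]
    rw [Equiv.sum_comp σ fun i => (X i : MvPolynomial (Fin n) (ZMod 2))]
    exact Ideal.subset_span rfl)

/-- The form `x_j - x_i` is irreducible. -/
lemma irr_sub {n : ℕ} {i j : Fin n} (h : i ≠ j) :
    Irreducible (X j - X i : MvPolynomial (Fin n) (ZMod 2)) := by
  have := irreducible_sumSMulX (Finsupp.single j (1 : ZMod 2) - Finsupp.single i 1)
    ⟨j, by simp [h, h.symm]⟩
    (fun r hr => isUnit_of_dvd_one (by simpa [h, h.symm] using hr j))
  simpa [sumSMulX] using this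

/-- The form `x_1 + ⋯ + x_n` is irreducible. -/
lemma irr_sum {n : ℕ} (hn : 3 ≤ n) :
    Irreducible (∑ i, X i : MvPolynomial (Fin n) (ZMod 2)) := by
  have := irreducible_sumSMulX (Finsupp.equivFunOnFinite.symm (fun _ : Fin n => (1 : ZMod 2)))
    ⟨⟨0, by omega⟩, by simp⟩
    (fun r hr => isUnit_of_dvd_one (by simpa using hr ⟨0, by omega⟩))
  simpa [sumSMulX, Finsupp.linearCombination_apply, Finsupp.sum_fintype] using this

lemma not_dvd_sub {n : ℕ} {i j k l : Fin n} (h1 : i < j) (h2 : k < l)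
    (h : ¬ (i = k ∧ j = l)) :
    ¬ (X j - X i : MvPolynomial (Fin n) (ZMod 2)) ∣ X l - X k := by
  rintro ⟨q, hq⟩
  have key : ∀ v : Fin n → ZMod 2, v j = v i → v l = v k := by
    intro v hv
    have := congrArg (eval v) hq
    simpa [hv, sub_eq_zero] using this
  by_cases hk : k = i ∨ k = j
  · have := key (Pi.single l 1)
    have e1 : j ≠ l := by rintro rfl; grind
    have e2 : i ≠ l := by rintro rfl; grind
    simp [e1, e2, h2.ne, h2.ne'] at this
  · have := key (Pi.single k 1)
    have e1 : j ≠ k := by grind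
    have e2 : i ≠ k := by grind
    simp [e1, e2, h2.ne, h2.ne'] at this

lemma sum_not_dvd_sub {n : ℕ} (hn : 3 ≤ n) {i j : Fin n} (h : i ≠ j) :
    ¬ (∑ i, X i : MvPolynomial (Fin n) (ZMod 2)) ∣ X j - X i := by
  rintro ⟨q, hq⟩
  obtain ⟨k, hk⟩ : ∃ k, k ∉ ({i, j} : Finset (Fin n)) := by
    by_contra! hc
    have h1 : (Finset.univ : Finset (Fin n)).card ≤ ({i, j} : Finset (Fin n)).card :=
      Finset.card_le_card fun x _ => hc x
    have h2 := Finset.card_le_two (a := i) (b := j)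
    simp at h1
    omega
  simp only [Finset.mem_insert, Finset.mem_singleton, not_or] at hk
  have := congrArg (eval (Pi.single i 1 + Pi.single k 1 : Fin n → ZMod 2)) hq
  simp [Finset.sum_add_distrib, h, h.symm, hk.1, hk.2, Ne.symm hk.1, Ne.symm hk.2,
    CharTwo.add_self_eq_zero] at this

/-- In characteristic two, a symmetrization is divisible by every `x_j - x_i`. -/
lemma sub_dvd_symm {n : ℕ} (h : MvPolynomial (Fin n) (ZMod 2)) {i j : Fin n} (hij : i ≠ j) :
    (X j - X i : MvPolynomial (Fin n) (ZMod 2)) ∣ ∑ σ : Equiv.Perm (Fin n), rename σ h := by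
  set I := Ideal.span {(X j - X i : MvPolynomial (Fin n) (ZMod 2))} with hI
  rw [← Ideal.mem_span_singleton, ← hI, ← Ideal.Quotient.eq_zero_iff_mem, map_sum]
  have hX : Ideal.Quotient.mk I (X j) = Ideal.Quotient.mk I (X i) :=
    Ideal.Quotient.eq.2 (Ideal.mem_span_singleton_self _)
  have key : ∀ f, Ideal.Quotient.mk I (rename (Equiv.swap i j) f) = Ideal.Quotient.mk I f := by
    intro f
    have : ((Ideal.Quotient.mkₐ (ZMod 2) I).comp (rename (Equiv.swap i j))) =
        Ideal.Quotient.mkₐ (ZMod 2) I := by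
      ext k
      simp only [AlgHom.comp_apply, rename_X, Ideal.Quotient.mkₐ_eq_mk]
      rcases eq_or_ne k i with rfl | h1
      · simp [hX]
      rcases eq_or_ne k j with rfl | h2
      · simp [hX]
      rw [Equiv.swap_apply_of_ne_of_ne h1 h2]
    exact DFunLike.congr_fun this f
  have two : ∀ x : MvPolynomial (Fin n) (ZMod 2) ⧸ I, x + x = 0 := by
    intro x
    obtain ⟨y, rfl⟩ := Ideal.Quotient.mk_surjective x
    rw [← map_add, CharTwo.add_self_eq_zero, map_zero]
  refine Finset.sum_involution (fun σ _ => Equiv.swap i j * σ) ?_ ?_ ?_ ?_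
  · intro σ _
    have : rename (Equiv.swap i j * σ) h = rename (Equiv.swap i j) (rename σ h) := by
      rw [rename_rename]; rfl
    rw [this, key, two]
  · intro σ _ _ he
    have : Equiv.swap i j = 1 := mul_eq_right.1 he
    exact hij (Equiv.swap_eq_one_iff.1 this)
  · simp
  · intro σ _
    simp [← mul_assoc]

lemma vand_dvd_symm {n : ℕ} (h : MvPolynomial (Fin n) (ZMod 2)) :
    (∏ i : Fin n, ∏ j ∈ Finset.Ioi i, (X j - X i : MvPolynomial (Fin n) (ZMod 2))) ∣
      ∑ σ : Equiv.Perm (Fin n), rename σ h := by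
  rw [Finset.prod_sigma']
  refine Finset.prod_dvd_of_isRelPrime ?_ ?_
  · rintro ⟨i, j⟩ h1 ⟨k, l⟩ h2 hne
    simp at h1 h2
    refine (irr_sub h1.ne).isRelPrime_iff_not_dvd.2 (not_dvd_sub h1 h2 ?_)
    rintro ⟨rfl, rfl⟩
    exact hne rfl
  · rintro ⟨i, j⟩ h1
    simp at h1
    exact sub_dvd_symm h h1.ne

/-- The Vandermonde product as a symmetrization, in characteristic two. -/
lemma vand_eq {n : ℕ} :
    (∏ i : Fin n, ∏ j ∈ Finset.Ioi i, (X j - X i : MvPolynomial (Fin n) (ZMod 2))) =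
      ∑ σ : Equiv.Perm (Fin n), rename σ (∏ i : Fin n, X i ^ (i : ℕ)) := by
  rw [← Matrix.det_vandermonde, Matrix.det_apply]
  refine Finset.sum_congr rfl fun σ _ => ?_
  have : ∀ x : MvPolynomial (Fin n) (ZMod 2), Equiv.Perm.sign σ • x = x := by
    intro x
    rcases Int.units_eq_one_or (Equiv.Perm.sign σ) with h | h <;> rw [h]
    · simp
    · rw [Units.neg_smul, one_smul, CharTwo.neg_eq]
  rw [this]
  simp [Matrix.vandermonde_apply]

lemma symm_isSymm {n : ℕ} (h : MvPolynomial (Fin n) (ZMod 2)) :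
    (∑ σ : Equiv.Perm (Fin n), rename σ h).IsSymmetric := by
  intro e
  rw [map_sum, ← Equiv.sum_comp (Equiv.mulLeft e) (fun σ : Equiv.Perm (Fin n) => rename σ h)]
  refine Finset.sum_congr rfl fun σ _ => ?_
  rw [rename_rename]; rfl

lemma isSymm_of_mul {n : ℕ} {a b : MvPolynomial (Fin n) (ZMod 2)} (ha0 : a ≠ 0)
    (ha : a.IsSymmetric) (hab : (a * b).IsSymmetric) : b.IsSymmetric := by
  intro e
  have := hab e
  rw [map_mul, ha e] at this
  exact mul_left_cancel₀ ha0 this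

lemma sumIdeal_isPrime {n : ℕ} (hn : 3 ≤ n) : (sumIdeal n).IsPrime :=
  (Ideal.span_singleton_prime (irr_sum hn).ne_zero).2 (irr_sum hn).prime

lemma exists_symm_lift {n : ℕ} (hn : 3 ≤ n) (f : MvPolynomial (Fin n) (ZMod 2))
    (hf : ∀ σ : Equiv.Perm (Fin n), Ideal.Quotient.mk (sumIdeal n) (rename σ f) =
      Ideal.Quotient.mk (sumIdeal n) f) :
    ∃ g : MvPolynomial (Fin n) (ZMod 2), g.IsSymmetric ∧
      Ideal.Quotient.mk (sumIdeal n) g = Ideal.Quotient.mk (sumIdeal n) f := by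
  haveI := sumIdeal_isPrime hn
  have hV0 : Ideal.Quotient.mk (sumIdeal n)
      (∏ i : Fin n, ∏ j ∈ Finset.Ioi i, (X j - X i : MvPolynomial (Fin n) (ZMod 2))) ≠ 0 := by
    rw [map_prod, Finset.prod_ne_zero_iff]
    intro i _
    rw [map_prod, Finset.prod_ne_zero_iff]
    intro j hj
    rw [Ne, Ideal.Quotient.eq_zero_iff_mem, sumIdeal, Ideal.mem_span_singleton]
    exact sum_not_dvd_sub hn (Finset.mem_Ioi.1 hj).ne
  obtain ⟨g, hg⟩ := vand_dvd_symm ((∏ i : Fin n, X i ^ (i : ℕ)) * f)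
  have hV := vand_eq (n := n)
  generalize (∏ i : Fin n, ∏ j ∈ Finset.Ioi i, (X j - X i : MvPolynomial (Fin n) (ZMod 2))) = V at *
  refine ⟨g, isSymm_of_mul (a := V) ?_ ?_ ?_, ?_⟩
  · rintro rfl; simp at hV0
  · rw [hV]; exact symm_isSymm _
  · rw [← hg]; exact symm_isSymm _
  · apply mul_left_cancel₀ hV0
    rw [← map_mul, ← hg, map_sum]
    simp_rw [map_mul, hf]
    rw [← Finset.sum_mul, ← map_sum, ← hV]

lemma aeval_succ {m : ℕ} (p : MvPolynomial (Fin m) (ZMod 2)) :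
    (esymmAlgHom (Fin (m + 1)) (ZMod 2) (m + 1) (rename Fin.succ p) : MvPolynomial _ (ZMod 2)) =
      aeval (fun i : Fin m => esymm (Fin (m + 1)) (ZMod 2) ((i : ℕ) + 2)) p := by
  rw [esymmAlgHom_apply, aeval_rename]
  rfl

lemma esymmAlgHom_bij (n : ℕ) : Function.Bijective (esymmAlgHom (Fin n) (ZMod 2) n) :=
  ⟨esymmAlgHom_injective _ (by simp), esymmAlgHom_surjective _ (by simp)⟩

lemma algInd_aux {m : ℕ} (hn : 3 ≤ m + 1) : AlgebraicIndependent (ZMod 2)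
    (fun i : Fin m => Ideal.Quotient.mk (sumIdeal (m + 1))
      (esymm (Fin (m + 1)) (ZMod 2) ((i : ℕ) + 2))) := by
  rw [algebraicIndependent_iff]
  intro p hp
  have h1 : aeval (fun i : Fin m => Ideal.Quotient.mk (sumIdeal (m + 1))
      (esymm (Fin (m + 1)) (ZMod 2) ((i : ℕ) + 2))) p =
      Ideal.Quotient.mkₐ (ZMod 2) (sumIdeal (m + 1))
        (aeval (fun i : Fin m => esymm (Fin (m + 1)) (ZMod 2) ((i : ℕ) + 2)) p) := by
    rw [← AlgHom.comp_apply, comp_aeval]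
    rfl
  rw [h1, ← aeval_succ, Ideal.Quotient.mkₐ_eq_mk, Ideal.Quotient.eq_zero_iff_mem, sumIdeal,
    Ideal.mem_span_singleton, ← esymm_one] at hp
  obtain ⟨h, hh⟩ := hp
  have hs : h.IsSymmetric := by
    refine isSymm_of_mul (a := esymm (Fin (m + 1)) (ZMod 2) 1) ?_ (esymm_isSymmetric _ _ _) ?_
    · rw [esymm_one]; exact (irr_sum hn).ne_zero
    · rw [← hh]; exact (esymmAlgHom (Fin (m + 1)) (ZMod 2) (m + 1) (rename Fin.succ p)).2
  obtain ⟨H, hH⟩ := (esymmAlgHom_bij (m + 1)).2 ⟨h, hs⟩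
  have h2 : rename Fin.succ p = X 0 * H := by
    apply (esymmAlgHom_bij (m + 1)).1
    apply Subtype.ext
    rw [hh, map_mul, hH, esymmAlgHom, aeval_X]
    simp
  have h3 := congrArg (aeval (Fin.cons 0 X : Fin (m + 1) → MvPolynomial (Fin m) (ZMod 2))) h2
  rw [aeval_rename, map_mul, aeval_X, Fin.cons_zero, zero_mul] at h3
  have h4 : ((Fin.cons 0 X : Fin (m + 1) → MvPolynomial (Fin m) (ZMod 2)) ∘ Fin.succ) = X := by
    ext1 i; simp
  rwa [h4, aeval_X_left_apply] at h3

lemma symm_mem_adjoin {m : ℕ} (g : MvPolynomial (Fin (m + 1)) (ZMod 2)) (hg : g.IsSymmetric) :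
    Ideal.Quotient.mk (sumIdeal (m + 1)) g ∈ Algebra.adjoin (ZMod 2)
        (Set.range fun i : Fin m => Ideal.Quotient.mk (sumIdeal (m + 1))
          (esymm (Fin (m + 1)) (ZMod 2) ((i : ℕ) + 2))) := by
  obtain ⟨H, hH⟩ := (esymmAlgHom_bij (m + 1)).2 ⟨g, hg⟩
  have : g = aeval (fun i : Fin (m + 1) ↦ esymm (Fin (m + 1)) (ZMod 2) (i + 1)) H := by
    rw [← esymmAlgHom_apply, hH]
  rw [this, ← Ideal.Quotient.mkₐ_eq_mk (ZMod 2), ← AlgHom.comp_apply, comp_aeval]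
  have hr := AlgHom.mem_range_self (aeval (R := ZMod 2) fun i : Fin (m + 1) =>
    Ideal.Quotient.mkₐ (ZMod 2) (sumIdeal (m + 1)) (esymm (Fin (m + 1)) (ZMod 2) (i + 1))) H
  rw [← Algebra.adjoin_range_eq_range_aeval] at hr
  refine Algebra.adjoin_le ?_ hr
  rintro _ ⟨i, rfl⟩
  refine Fin.cases ?_ (fun i => ?_) i
  · have : Ideal.Quotient.mk (sumIdeal (m + 1)) (esymm (Fin (m + 1)) (ZMod 2) 1) = 0 := by
      rw [Ideal.Quotient.eq_zero_iff_mem, esymm_one]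
      exact Ideal.mem_span_singleton_self _
    change Ideal.Quotient.mk (sumIdeal (m + 1)) (esymm (Fin (m + 1)) (ZMod 2) 1) ∈
      Algebra.adjoin (ZMod 2) _
    rw [this]
    exact zero_mem _
  · exact Algebra.subset_adjoin ⟨i, rfl⟩

/-- For `n ≥ 3`, the ring of invariants of `S_n` acting on
`F_2[x_1, …, x_n]/(x_1 + ⋯ + x_n)` is the polynomial algebra generated by the
images of the elementary symmetric polynomials `w_2, …, w_n`: these images are
algebraically independent and generate the full invariant ring. -/
theorem stmt5 (n : ℕ) (hn : 3 ≤ n) :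
    AlgebraicIndependent (ZMod 2)
      (fun i : Fin (n - 1) =>
        Ideal.Quotient.mk (sumIdeal n) (esymm (Fin n) (ZMod 2) ((i : ℕ) + 2))) ∧
    ((Algebra.adjoin (ZMod 2)
        (Set.range fun i : Fin (n - 1) =>
          Ideal.Quotient.mk (sumIdeal n) (esymm (Fin n) (ZMod 2) ((i : ℕ) + 2))) :
      Set (MvPolynomial (Fin n) (ZMod 2) ⧸ sumIdeal n)) =
      {q | ∀ σ : Equiv.Perm (Fin n), quotAct n σ q = q}) := by
  obtain ⟨m, rfl⟩ : ∃ m, n = m + 1 := ⟨n - 1, by omega⟩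
  refine ⟨algInd_aux hn, ?_⟩
  apply Set.Subset.antisymm
  · intro q hq σ
    have hmk : ∀ f, quotAct (m + 1) σ (Ideal.Quotient.mk _ f) =
        Ideal.Quotient.mk _ (rename σ f) := fun f => Ideal.quotientMap_mk
    induction hq using Algebra.adjoin_induction with
    | mem x hx =>
      obtain ⟨i, rfl⟩ := hx
      simp only [hmk, rename_esymm]
    | algebraMap r =>
      change quotAct (m + 1) σ (Ideal.Quotient.mk _ (C r)) = Ideal.Quotient.mk _ (C r)
      rw [hmk, rename_C]
    | add x y _ _ hx hy => rw [map_add, hx, hy]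
    | mul x y _ _ hx hy => rw [map_mul, hx, hy]
  · intro q hq
    obtain ⟨f, rfl⟩ := Ideal.Quotient.mk_surjective q
    obtain ⟨g, hg, hgf⟩ := exists_symm_lift hn f fun σ => hq σ
    rw [← hgf]
    exact symm_mem_adjoin g hg
end

section
/- Let K be a field, W a finite group acting linearly and faithfully on a K-vector space V of dimension k, and let f_1,...,f_k be homogeneous W-invariant polynomials in K[V] such that the inclusion K[f_1,...,f_k] ⊆ K[V] makes K[V] a finitely generated module over K[f_1,...,f_k], and (deg f_1)···(deg f_k) = |W|. Then K[f_1,...,f_k] is a polynomial algebra on f_1,...,f_k and equals the invariant ring K[V]^W. -/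
open MvPolynomial

/-- The action of a linear automorphism `g` of `V = K^k` on the polynomial
algebra `K[V] = K[x_1, …, x_k]` (the dual/substitution action, sending `x_i`
to `∑_j g_{ji} x_j`). -/
noncomputable def polyAct (K : Type) [Field K] (k : ℕ)
    (g : (Fin k → K) ≃ₗ[K] (Fin k → K)) :
    MvPolynomial (Fin k) K →ₐ[K] MvPolynomial (Fin k) K :=
  aeval fun i : Fin k =>
    ∑ j : Fin k,
      C (LinearMap.toMatrix (Pi.basisFun K (Fin k)) (Pi.basisFun K (Fin k))
          g.toLinearMap j i) * X j


/-- Exponents of weighted degree at most `n`. -/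
def wSet {k : ℕ} (d : Fin k → ℕ) (n : ℕ) : Set (Fin k →₀ ℕ) := {a | ∑ i, d i * a i ≤ n}

lemma wSet_box {k : ℕ} (d : Fin k → ℕ) (hd : ∀ i, 0 < d i) (n : ℕ) (a : wSet d n) (i : Fin k) :
    a.1 i < n + 1 := by
  have h : ∑ i, d i * a.1 i ≤ n := a.2
  have h1 : d i * a.1 i ≤ ∑ i, d i * a.1 i :=
    Finset.single_le_sum (f := fun i => d i * a.1 i) (fun _ _ => Nat.zero_le _) (Finset.mem_univ i)
  have := hd i
  nlinarith

lemma wSet_inj {k : ℕ} (d : Fin k → ℕ) (hd : ∀ i, 0 < d i) (n : ℕ) :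
    Function.Injective (fun (a : wSet d n) (i : Fin k) =>
      (⟨a.1 i, wSet_box d hd n a i⟩ : Fin (n + 1))) := by
  intro a b h
  apply Subtype.ext
  ext i
  have := congrFun h i
  simpa using this

lemma wSet_finite {k : ℕ} (d : Fin k → ℕ) (hd : ∀ i, 0 < d i) (n : ℕ) : Finite (wSet d n) :=
  Finite.of_injective _ (wSet_inj d hd n)

lemma wSet_card_le {k : ℕ} (d : Fin k → ℕ) (hd : ∀ i, 0 < d i) (n : ℕ) :
    Nat.card (wSet d n) ≤ (n + 1) ^ k := by
  have := Nat.card_le_card_of_injective _ (wSet_inj d hd n)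
  simpa using this

lemma wSet_card_mul {k : ℕ} (d : Fin k → ℕ) (hd : ∀ i, 0 < d i) (n : ℕ) :
    Nat.card (wSet (fun _ : Fin k => 1) n) ≤ (∏ i, d i) * Nat.card (wSet d n) := by
  have := wSet_finite d hd n
  have hc : (∏ i, d i) * Nat.card (wSet d n) = Nat.card ((∀ i, Fin (d i)) × wSet d n) := by
    simp [Nat.card_prod]
  rw [hc]
  let F : wSet (fun _ : Fin k => 1) n → (∀ i, Fin (d i)) × wSet d n := fun b =>
    (fun i => ⟨b.1 i % d i, Nat.mod_lt _ (hd i)⟩,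
      ⟨Finsupp.equivFunOnFinite.symm (fun i => b.1 i / d i), by
        have h : ∑ i, 1 * b.1 i ≤ n := b.2
        refine le_trans (Finset.sum_le_sum fun i _ => ?_) h
        simpa using Nat.mul_div_le (b.1 i) (d i)⟩)
  apply Nat.card_le_card_of_injective F
  intro a b h
  apply Subtype.ext
  ext i
  have h1 : a.1 i % d i = b.1 i % d i := by
    have := congrFun (congrArg Prod.fst h) i
    simpa [F] using this
  have h2 : a.1 i / d i = b.1 i / d i := by
    have := DFunLike.congr_fun (congrArg Subtype.val (congrArg Prod.snd h)) i
    simpa [F] using this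
  rw [← Nat.div_add_mod (a.1 i) (d i), h1, h2, Nat.div_add_mod]

lemma finrank_restrict (K : Type) [Field K] (k n : ℕ) :
    Module.finrank K (restrictTotalDegree (Fin k) K n) =
      Nat.card (wSet (fun _ : Fin k => 1) n) := by
  have := Module.finrank_eq_nat_card_basis (basisRestrictSupport K
    { m : Fin k →₀ ℕ | (m.sum fun _ e => e) ≤ n })
  refine this.trans ?_
  congr 2
  ext m
  simp [wSet, Finsupp.sum_fintype]

lemma growth (u : ℕ → ℕ) (k D r P : ℕ) (h0 : 0 < u 0) (hle : ∀ n, u n ≤ (n + 1) ^ k)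
    (h : ∀ n, r * u n ≤ P * u (n + D)) : r ≤ P := by
  by_contra hlt
  push Not at hlt
  have hP : 0 < P := by
    rcases Nat.eq_zero_or_pos P with rfl | hP
    · have := h 0
      nlinarith
    · exact hP
  have hPR : (0 : ℝ) < P := by exact_mod_cast hP
  have hq : (1 : ℝ) < (r : ℝ) / P := by
    rw [one_lt_div hPR]; exact_mod_cast hlt
  have hexp : ∀ m : ℕ, ((r : ℝ) / P) ^ m ≤ u (m * D) := by
    intro m
    induction m with
    | zero => simpa using (Nat.one_le_iff_ne_zero.2 h0.ne')
    | succ m ih =>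
      have h1 : (r : ℝ) * u (m * D) ≤ P * u (m * D + D) := by exact_mod_cast h (m * D)
      rw [pow_succ, Nat.succ_mul]
      calc ((r : ℝ) / P) ^ m * (r / P) ≤ u (m * D) * (r / P) := by
            gcongr
        _ = (r * u (m * D)) / P := by ring
        _ ≤ (P * u (m * D + D)) / P := by gcongr
        _ = u (m * D + D) := by field_simp
  have hb : ∀ m : ℕ, 1 ≤ m → ((r : ℝ) / P) ^ m ≤ (D + 1 : ℝ) ^ k * (m : ℝ) ^ k := by
    intro m hm
    refine (hexp m).trans ?_
    rw [← mul_pow]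
    have h1 : (u (m * D) : ℝ) ≤ ((m * D + 1 : ℕ) : ℝ) ^ k := by exact_mod_cast hle (m * D)
    refine h1.trans ?_
    gcongr
    push_cast
    have : (1 : ℝ) ≤ m := by exact_mod_cast hm
    linarith
  have ht := tendsto_pow_const_div_const_pow_of_one_lt k hq
  have hc : (0 : ℝ) < 1 / (D + 1 : ℝ) ^ k := by positivity
  obtain ⟨m, hm1, hm2⟩ := ((ht.eventually (gt_mem_nhds hc)).and
    (Filter.eventually_ge_atTop 1)).exists
  have h3 := hb m hm2
  have hpos : (0 : ℝ) < ((r : ℝ) / P) ^ m := by positivity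
  rw [div_lt_div_iff₀ hpos (by positivity)] at hm1
  linarith

lemma rank_bound {K : Type} [Field K] (k : ℕ)
    (f : Fin k → MvPolynomial (Fin k) K) (d : Fin k → ℕ) (hd : ∀ i, 0 < d i)
    (hhom : ∀ i, (f i).IsHomogeneous (d i))
    (hf : AlgebraicIndependent K f) {ι : Type} [Finite ι] (e : ι → MvPolynomial (Fin k) K)
    (he : LinearIndependent (Algebra.adjoin K (Set.range f)) e) :
    Nat.card ι ≤ ∏ i, d i := by
  have := Fintype.ofFinite ι
  let D := Finset.univ.sup fun j => (e j).totalDegree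
  have hD : ∀ j, (e j).totalDegree ≤ D := fun j =>
    Finset.le_sup (f := fun j => (e j).totalDegree) (Finset.mem_univ j)
  have hb : LinearIndependent K (fun a : Fin k →₀ ℕ =>
      (hf.aevalEquiv (monomial a 1) : Algebra.adjoin K (Set.range f))) := by
    have h1 := (basisMonomials (Fin k) K).linearIndependent
    have h2 := h1.map' hf.aevalEquiv.toLinearMap
      (LinearMap.ker_eq_bot.2 hf.aevalEquiv.injective)
    have h3 : (fun a : Fin k →₀ ℕ =>
      (hf.aevalEquiv (monomial a 1) : Algebra.adjoin K (Set.range f))) =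
      hf.aevalEquiv.toLinearMap ∘ basisMonomials (Fin k) K := by
      ext a
      simp
    rw [h3]
    exact h2
  have hli := linearIndependent_smul hb he
  have hval : ∀ a : Fin k →₀ ℕ, ((hf.aevalEquiv (monomial a 1) :
      Algebra.adjoin K (Set.range f)) : MvPolynomial (Fin k) K) = ∏ i, f i ^ a i := by
    intro a
    rw [hf.aevalEquiv_apply_coe, aeval_monomial]
    simp [Finsupp.prod_fintype]
  refine growth (fun n => Nat.card (wSet (fun _ : Fin k => 1) n)) k D _ _ ?_
    (wSet_card_le _ (by simp)) ?_
  · have := wSet_finite (fun _ : Fin k => 1) (by simp) 0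
    have : Nonempty (wSet (fun _ : Fin k => 1) 0) := ⟨⟨0, by simp [wSet]⟩⟩
    exact Nat.card_pos
  · intro n
    have hfinn := wSet_finite d hd n
    have key : Nat.card (wSet d n × ι) ≤ Nat.card (wSet (fun _ : Fin k => 1) (n + D)) := by
      rw [← finrank_restrict K]
      have hinj : Function.Injective (fun p : wSet d n × ι => ((p.1 : Fin k →₀ ℕ), p.2)) := by
        rintro ⟨a, i⟩ ⟨b, j⟩ h
        simpa [Subtype.ext_iff] using h
      have hli2 := hli.comp _ hinj
      have hmem : ∀ p : wSet d n × ι, (hf.aevalEquiv (monomial p.1.1 1) :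
          Algebra.adjoin K (Set.range f)) • e p.2 ∈ restrictTotalDegree (Fin k) K (n + D) := by
        rintro ⟨a, j⟩
        rw [mem_restrictTotalDegree, Subalgebra.smul_def, hval, smul_eq_mul]
        refine (totalDegree_mul _ _).trans (add_le_add ?_ (hD j))
        refine (IsHomogeneous.totalDegree_le ?_).trans (a.2 : ∑ i, d i * a.1 i ≤ n)
        exact IsHomogeneous.prod _ _ _ fun i _ => (hhom i).pow _
      have hli3 : LinearIndependent K (fun p : wSet d n × ι =>
          (⟨_, hmem p⟩ : restrictTotalDegree (Fin k) K (n + D))) :=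
        LinearIndependent.of_comp (restrictTotalDegree (Fin k) K (n + D)).subtype hli2
      have := Fintype.ofFinite (wSet d n × ι)
      rw [Nat.card_eq_fintype_card]
      exact hli3.fintype_card_le_finrank
    rw [Nat.card_prod] at key
    calc Nat.card ι * Nat.card (wSet (fun _ : Fin k => 1) n)
        ≤ Nat.card ι * ((∏ i, d i) * Nat.card (wSet d n)) :=
          Nat.mul_le_mul_left _ (wSet_card_mul d hd n)
      _ = (∏ i, d i) * (Nat.card (wSet d n) * Nat.card ι) := by ring
      _ ≤ _ := Nat.mul_le_mul_left _ key

lemma exists_indep {W R S : Type} [Finite W] [CommRing R] [CommRing S] [IsDomain S] [Algebra R S]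
    (hRS : Function.Injective (algebraMap R S))
    (σ : W → S →+* S) (hσ : Function.Injective σ)
    (hfix : ∀ w r, σ w (algebraMap R S r) = algebraMap R S r) :
    ∃ (κ : Type) (_ : Finite κ) (e : κ → S), Nat.card κ = Nat.card W ∧ LinearIndependent R e := by
  classical
  have := Fintype.ofFinite W
  let L := FractionRing S
  have hinjL : Function.Injective (algebraMap S L) := IsFractionRing.injective S L
  let v : S → W → L := fun s w => algebraMap S L (σ w s)
  obtain ⟨κ, a, -, hsp, hli⟩ := exists_linearIndependent' L v
  have htop : Submodule.span L (Set.range v) = ⊤ := by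
    by_contra hne
    obtain ⟨φ, hφ, hker⟩ := Submodule.exists_le_ker_of_lt_top _ (lt_top_iff_ne_top.2 hne)
    apply hφ
    let m : W → (S →* L) := fun w => ((algebraMap S L).comp (σ w) : S →+* L)
    have hm : Function.Injective m := by
      intro w w' h
      apply hσ
      ext s
      exact hinjL (DFunLike.congr_fun h s)
    have hD := (linearIndependent_monoidHom S L).comp m hm
    rw [Fintype.linearIndependent_iff] at hD
    have hz := hD (fun w => φ (Pi.single w 1)) (by
      ext s
      have h1 : φ (v s) = 0 := hker (Submodule.subset_span ⟨s, rfl⟩)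
      rw [LinearMap.pi_apply_eq_sum_univ φ (v s)] at h1
      rw [Finset.sum_apply]
      simp only [Pi.zero_apply, Pi.smul_apply, Function.comp_apply]
      rw [← h1]
      refine Finset.sum_congr rfl fun w _ => ?_
      have h2 : (Pi.single w 1 : W → L) = fun j => if w = j then 1 else 0 := by
        ext j; simp [Pi.single_apply, eq_comm]
      rw [h2, smul_eq_mul, smul_eq_mul, mul_comm]
      rfl)
    apply LinearMap.pi_ext'
    intro w
    ext
    simpa using hz w
  let b := Module.Basis.mk hli (by rw [hsp, htop])
  have hfin : Finite κ := Module.Finite.finite_basis b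
  refine ⟨κ, hfin, a, ?_, ?_⟩
  · rw [← Module.finrank_eq_nat_card_basis b, Module.finrank_fintype_fun_eq_card,
      Nat.card_eq_fintype_card]
  · have := Fintype.ofFinite κ
    rw [Fintype.linearIndependent_iff] at hli ⊢
    intro g hg j
    have h1 := hli (fun j => algebraMap S L (algebraMap R S (g j))) (by
      ext w
      rw [Finset.sum_apply]
      have h2 := congrArg (fun s => algebraMap S L (σ w s)) hg
      simp only [map_sum, Algebra.smul_def, map_mul, hfix, map_zero] at h2
      simpa [v] using h2) j
    exact hRS (hinjL (by simpa using h1))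

lemma polyAct_inj (K : Type) [Field K] (k : ℕ) : Function.Injective (polyAct K k) := by
  intro g h hgh
  have : g.toLinearMap = h.toLinearMap := by
    apply (LinearMap.toMatrix (Pi.basisFun K (Fin k)) (Pi.basisFun K (Fin k))).injective
    ext j i
    have h1 := congrArg (coeff (Finsupp.single j 1)) (DFunLike.congr_fun hgh (X i))
    simpa only [polyAct, aeval_X, coeff_sum, coeff_C_mul, coeff_X, Finsupp.single_left_inj
      (one_ne_zero : (1 : ℕ) ≠ 0), mul_ite, mul_one, mul_zero, Finset.sum_ite_eq',
      Finset.mem_univ, if_true] using h1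
  exact LinearEquiv.toLinearMap_injective this

lemma mem_of_frac {S R : Type} [CommRing R] [IsDomain R] [CommRing S] [IsDomain S] [Algebra R S]
    (hRS : Function.Injective (algebraMap R S)) [IsIntegrallyClosed R]
    (b : S) (hb : IsIntegral R b) (x y : R) (hy : y ≠ 0) (h : algebraMap R S x = algebraMap R S y * b) :
    ∃ z, algebraMap R S z = b := by
  let F := FractionRing R
  let L := FractionRing S
  have hinj : Function.Injective (algebraMap R L) := by
    rw [IsScalarTower.algebraMap_eq R S L]
    exact (IsFractionRing.injective S L).comp hRS
  let φ : F →ₐ[R] L := IsFractionRing.liftAlgHom (g := Algebra.ofId R L) hinj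
  have hyF : algebraMap R F y ≠ 0 := by
    simpa using hy
  have hyL : algebraMap R L y ≠ 0 := by
    rw [Ne, map_eq_zero_iff _ hinj]; exact hy
  have hφ : φ (algebraMap R F x / algebraMap R F y) = algebraMap S L b := by
    rw [map_div₀, AlgHom.commutes, AlgHom.commutes, div_eq_iff hyL,
      IsScalarTower.algebraMap_apply R S L, h, IsScalarTower.algebraMap_apply R S L, map_mul,
      mul_comm]
  have hIntg : IsIntegral R (algebraMap R F x / algebraMap R F y) := by
    rw [← isIntegral_algHom_iff φ φ.toRingHom.injective, hφ]
    exact hb.map (IsScalarTower.toAlgHom R S L)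
  obtain ⟨z, hz⟩ := IsIntegrallyClosed.algebraMap_eq_of_integral hIntg
  refine ⟨z, IsFractionRing.injective S L ?_⟩
  rw [← hφ, ← hz, AlgHom.commutes, ← IsScalarTower.algebraMap_apply]

lemma inv_mem {K S W : Type} [Finite W] [Nonempty W] [Field K] [CommRing S] [IsDomain S]
    [Algebra K S] (A : Subalgebra K S) [IsIntegrallyClosed A] [Algebra.IsIntegral A S]
    (σ : W → S →ₐ[K] S) (hσ : Function.Injective σ) (hA : ∀ p ∈ A, ∀ w, σ w p = p)
    (hrank : ∀ (ι : Type) [Finite ι] (e : ι → S), LinearIndependent A e →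
      Nat.card ι ≤ Nat.card W) (b : S) (hb : ∀ w, σ w b = b) : b ∈ A := by
  let B : Subalgebra A S :=
    { carrier := {p | ∀ w : W, σ w p = p}
      mul_mem' := fun {x y} hx hy w => by rw [map_mul, hx w, hy w]
      add_mem' := fun {x y} hx hy w => by rw [map_add, hx w, hy w]
      algebraMap_mem' := fun r => hA r.1 r.2 }
  obtain ⟨κ, hκ, e, hcard, he⟩ := exists_indep (R := B) (S := S)
    Subtype.val_injective (fun w : W => (σ w).toRingHom)
    (fun w w' h => hσ (AlgHom.ext fun p => RingHom.congr_fun h p))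
    (fun w r => r.2 w)
  have hnot : ¬ LinearIndependent A ![(1 : B), (⟨b, hb⟩ : B)] := by
    intro hli
    have h1 := hrank _ _ (linearIndependent_smul hli he)
    rw [Nat.card_prod, hcard, Nat.card_eq_fintype_card (α := Fin _), Fintype.card_fin] at h1
    have h2 : 0 < Nat.card W := Nat.card_pos
    omega
  rw [LinearIndependent.pair_iff] at hnot
  push Not at hnot
  obtain ⟨x, y, hxy, hne⟩ := hnot
  have hxy' : (x : S) + y * b = 0 := by
    have := congrArg Subtype.val hxy
    simpa [Subalgebra.smul_def] using this
  have hy : y ≠ 0 := by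
    rintro rfl
    apply hne _ rfl
    apply Subtype.ext
    simpa using hxy'
  obtain ⟨z, hz⟩ := mem_of_frac (R := A) (S := S) Subtype.val_injective b
    (Algebra.IsIntegral.isIntegral b) (-x) y hy (by
      change -(x : S) = y * b
      linear_combination -hxy')
  rw [← hz]
  exact z.2

/-- Smith's Proposition 5.5.5: if a finite group `W` acts linearly and
faithfully on `V = K^k`, and `f_1, …, f_k` are homogeneous `W`-invariant
polynomials over which `K[V]` is module-finite with `∏ deg f_i = |W|`, then
the `f_i` are algebraically independent (so generate a polynomial algebra) and
generate the full invariant ring `K[V]^W`. -/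
theorem stmt7 {K : Type} [Field K] {W : Type} [Group W] [Finite W] (k : ℕ)
    (ρ : W →* ((Fin k → K) ≃ₗ[K] (Fin k → K)))
    (hfaithful : Function.Injective ρ)
    (f : Fin k → MvPolynomial (Fin k) K) (d : Fin k → ℕ)
    (hhom : ∀ i, (f i).IsHomogeneous (d i))
    (hinv : ∀ (i : Fin k) (w : W), polyAct K k (ρ w) (f i) = f i)
    (hfin : Module.Finite (Algebra.adjoin K (Set.range f)) (MvPolynomial (Fin k) K))
    (hdeg : ∏ i, d i = Nat.card W) :
    AlgebraicIndependent K f ∧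
    ((Algebra.adjoin K (Set.range f) : Set (MvPolynomial (Fin k) K)) =
      {p | ∀ w : W, polyAct K k (ρ w) p = p}) := by
  have hd : ∀ i, 0 < d i := by
    intro i
    rw [Nat.pos_iff_ne_zero]
    intro h0
    have : ∏ i, d i = 0 := Finset.prod_eq_zero (Finset.mem_univ i) h0
    have h1 : 0 < Nat.card W := Nat.card_pos
    omega
  have hf : AlgebraicIndependent K f := by
    refine (Algebra.IsAlgebraic.isTranscendenceBasis_of_lift_le_trdeg_of_finite K f ?_).1
    simp
  refine ⟨hf, ?_⟩
  have hA : ∀ p ∈ Algebra.adjoin K (Set.range f), ∀ w : W, polyAct K k (ρ w) p = p := by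
    intro p hp w
    have : Algebra.adjoin K (Set.range f) ≤
        AlgHom.equalizer (polyAct K k (ρ w)) (AlgHom.id K _) := by
      apply Algebra.adjoin_le
      rintro _ ⟨i, rfl⟩
      exact hinv i w
    exact this hp
  apply Set.Subset.antisymm
  · exact hA
  intro b hb
  have hIC : IsIntegrallyClosed (Algebra.adjoin K (Set.range f)) :=
    IsIntegrallyClosed.of_equiv hf.aevalEquiv.toRingEquiv
  have hIntg : Algebra.IsIntegral (Algebra.adjoin K (Set.range f)) (MvPolynomial (Fin k) K) :=
    Algebra.IsIntegral.of_finite _ _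
  refine inv_mem (Algebra.adjoin K (Set.range f)) (fun w => polyAct K k (ρ w))
    (fun w w' h => hfaithful (polyAct_inj K k h)) hA ?_ b hb
  intro ι _ e he
  rw [← hdeg]
  exact rank_bound k f d hd hhom hf e he
end

section
/- Let V be a finite-dimensional faithful representation of a finite group W over a field K, and suppose the invariant ring K[V]^W is a polynomial algebra on homogeneous generators f_1,...,f_k where k = dim V. Then the product of the degrees (deg f_1)···(deg f_k) equals |W|. -/
open MvPolynomial

theorem growth_aux (A B c k : ℕ) (H : ℕ → ℕ) (h1 : ∀ n, 1 ≤ H n)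
    (h2 : ∀ n, H n ≤ (n + 1) ^ k) (h3 : ∀ n, A * H n ≤ B * H (n + c)) : A ≤ B := by
  by_contra hAB
  push Not at hAB
  have h4 : ∀ m, A ^ m ≤ B ^ m * H (m * c) := by
    have h5 : ∀ m, A ^ m * H 0 ≤ B ^ m * H (m * c) := by
      intro m
      induction m with
      | zero => simp
      | succ m ih =>
        calc A ^ (m + 1) * H 0 = A * (A ^ m * H 0) := by ring
          _ ≤ A * (B ^ m * H (m * c)) := Nat.mul_le_mul_left _ ih
          _ = B ^ m * (A * H (m * c)) := by ring
          _ ≤ B ^ m * (B * H (m * c + c)) := Nat.mul_le_mul_left _ (h3 _)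
          _ = B ^ (m + 1) * H ((m + 1) * c) := by
            rw [show (m + 1) * c = m * c + c by ring]; ring
    intro m
    exact le_trans (Nat.le_mul_of_pos_right _ (h1 0)) (h5 m)
  have hB : 0 < B := by
    rcases Nat.eq_zero_or_pos B with h | h
    · have := h4 1
      subst h
      simp at this
      omega
    · exact h
  have hr : (1 : ℝ) < (A : ℝ) / B := by
    rw [lt_div_iff₀ (by exact_mod_cast hB)]
    simpa using (by exact_mod_cast hAB : (B : ℝ) < A)
  have h6 : ∀ m : ℕ, ((A : ℝ) / B) ^ m ≤ ((m * c + 1 : ℕ) : ℝ) ^ k := by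
    intro m
    rw [div_pow, div_le_iff₀ (by positivity)]
    have := (h4 m).trans (Nat.mul_le_mul_left _ (h2 (m * c)))
    rw [mul_comm]
    exact_mod_cast this
  have h7 := tendsto_pow_const_div_const_pow_of_one_lt k hr
  have h8 : Filter.Tendsto (fun m : ℕ => ((c : ℝ) + 1) ^ k * ((m : ℝ) ^ k / ((A : ℝ) / B) ^ m))
      Filter.atTop (nhds (((c : ℝ) + 1) ^ k * 0)) := h7.const_mul _
  rw [mul_zero] at h8
  have h9 := (h8.eventually (gt_mem_nhds (zero_lt_one))).and (Filter.eventually_ge_atTop 1)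
  obtain ⟨m, hm, hm1⟩ := h9.exists
  have hp : 0 < ((A : ℝ) / B) ^ m := by positivity
  rw [← mul_div_assoc, div_lt_one hp, ← mul_pow] at hm
  have h10 : ((m * c + 1 : ℕ) : ℝ) ^ k ≤ (((c : ℝ) + 1) * m) ^ k := by
    gcongr
    push_cast
    have : (1 : ℝ) ≤ m := by exact_mod_cast hm1
    nlinarith
  linarith [h6 m]

/-- exponents of weighted degree at most `n` -/
def wtSet {k : ℕ} (d : Fin k → ℕ) (n : ℕ) : Set (Fin k →₀ ℕ) := {a | ∑ i, a i * d i ≤ n}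

theorem wtSet_bound {k : ℕ} (d : Fin k → ℕ) (hd : ∀ i, 0 < d i) (n : ℕ) (a : wtSet d n)
    (i : Fin k) : a.1 i < n + 1 := by
  have h := a.2
  simp only [wtSet, Set.mem_ofPred_eq] at h
  have h1 : a.1 i * d i ≤ ∑ i, a.1 i * d i :=
    Finset.single_le_sum (f := fun i => a.1 i * d i) (fun _ _ => Nat.zero_le _) (Finset.mem_univ i)
  have := Nat.le_mul_of_pos_right (a.1 i) (hd i)
  omega

theorem wtSet_inj {k : ℕ} (d : Fin k → ℕ) (hd : ∀ i, 0 < d i) (n : ℕ) :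
    Function.Injective (fun (a : wtSet d n) (i : Fin k) =>
      (⟨a.1 i, wtSet_bound d hd n a i⟩ : Fin (n + 1))) := by
  intro a b h
  ext i
  have := congrFun h i
  simpa using this

theorem wtSet_finite {k : ℕ} (d : Fin k → ℕ) (hd : ∀ i, 0 < d i) (n : ℕ) : Finite (wtSet d n) :=
  Finite.of_injective _ (wtSet_inj d hd n)

theorem wtSet_card_le {k : ℕ} (d : Fin k → ℕ) (hd : ∀ i, 0 < d i) (n : ℕ) :
    Nat.card (wtSet d n) ≤ (n + 1) ^ k := by
  have := Nat.card_le_card_of_injective _ (wtSet_inj d hd n)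
  simpa using this

theorem wtSet_card_pos {k : ℕ} (d : Fin k → ℕ) (hd : ∀ i, 0 < d i) (n : ℕ) :
    1 ≤ Nat.card (wtSet d n) := by
  have := wtSet_finite d hd n
  have : Nonempty (wtSet d n) := ⟨⟨0, by simp [wtSet]⟩⟩
  exact Nat.card_pos

theorem comb1 {k : ℕ} (d : Fin k → ℕ) (hd : ∀ i, 0 < d i) (n : ℕ) :
    Nat.card (wtSet (fun _ : Fin k => 1) n) ≤ (∏ i, d i) * Nat.card (wtSet d n) := by
  have := wtSet_finite d hd n
  have hc : Nat.card ((i : Fin k) → Fin (d i)) = ∏ i, d i := by simp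
  rw [← hc, ← Nat.card_prod]
  let F : wtSet (fun _ : Fin k => 1) n → ((i : Fin k) → Fin (d i)) × wtSet d n := fun a =>
    (fun i => ⟨a.1 i % d i, Nat.mod_lt _ (hd i)⟩,
      ⟨Finsupp.equivFunOnFinite.symm (fun i => a.1 i / d i), by
        have h := a.2
        simp only [wtSet, Set.mem_ofPred_eq, mul_one] at h ⊢
        refine le_trans (Finset.sum_le_sum fun i _ => ?_) h
        simpa using Nat.div_mul_le_self (a.1 i) (d i)⟩)
  refine Nat.card_le_card_of_injective F ?_
  intro a b h
  ext i
  have h1 := congrFun (congrArg Prod.fst h) i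
  have h2 := DFunLike.congr_fun (congrArg Subtype.val (congrArg Prod.snd h)) i
  simp only [F, Fin.mk.injEq] at h1
  simp only [F, Finsupp.coe_equivFunOnFinite_symm] at h2
  rw [← Nat.div_add_mod (a.1 i) (d i), ← Nat.div_add_mod (b.1 i) (d i), h1, h2]

theorem comb2 {k : ℕ} (d : Fin k → ℕ) (n : ℕ) :
    (∏ i, d i) * Nat.card (wtSet d n) ≤
      Nat.card (wtSet (fun _ : Fin k => 1) (n + ∑ i, d i)) := by
  have := wtSet_finite (fun _ : Fin k => 1) (fun _ => one_pos) (n + ∑ i, d i)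
  have hc : Nat.card ((i : Fin k) → Fin (d i)) = ∏ i, d i := by simp
  rw [← hc, ← Nat.card_prod]
  let F : ((i : Fin k) → Fin (d i)) × wtSet d n →
      wtSet (fun _ : Fin k => 1) (n + ∑ i, d i) := fun x =>
    ⟨Finsupp.equivFunOnFinite.symm (fun i => x.2.1 i * d i + (x.1 i : ℕ)), by
        have h := x.2.2
        simp only [wtSet, Set.mem_ofPred_eq, mul_one] at h ⊢
        simp only [Finsupp.coe_equivFunOnFinite_symm, Finset.sum_add_distrib]
        exact add_le_add h (Finset.sum_le_sum fun i _ => (x.1 i).2.le)⟩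
  refine Nat.card_le_card_of_injective F ?_
  rintro ⟨r, a⟩ ⟨s, b⟩ h
  have h2 : ∀ i, a.1 i * d i + (r i : ℕ) = b.1 i * d i + (s i : ℕ) := fun i => by
    have := DFunLike.congr_fun (congrArg Subtype.val h) i
    simpa [F] using this
  have h3 : ∀ i, (r i : ℕ) = s i := fun i => by
    have := congrArg (· % d i) (h2 i)
    simpa [Nat.mod_eq_of_lt (r i).2, Nat.mod_eq_of_lt (s i).2, Nat.add_mod] using this
  have h4 : ∀ i, a.1 i = b.1 i := fun i => by
    have := h2 i
    rw [h3 i] at this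
    exact Nat.eq_of_mul_eq_mul_right (by have := (r i).2; omega) (Nat.add_right_cancel this)
  refine Prod.ext (funext fun i => Fin.ext (h3 i)) (Subtype.ext (Finsupp.ext h4))

/-- polynomials of weighted degree at most `n` -/
noncomputable def wtSub (K : Type) [Field K] {k : ℕ} (d : Fin k → ℕ) (n : ℕ) :
    Submodule K (MvPolynomial (Fin k) K) := restrictSupport K (wtSet d n)

theorem finrank_wtSub (K : Type) [Field K] {k : ℕ} (d : Fin k → ℕ) (n : ℕ) :
    Module.finrank K (wtSub K d n) = Nat.card (wtSet d n) :=
  Module.finrank_eq_nat_card_basis (basisRestrictSupport K (wtSet d n))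

theorem finite_wtSub (K : Type) [Field K] {k : ℕ} (d : Fin k → ℕ) (hd : ∀ i, 0 < d i) (n : ℕ) :
    Module.Finite K (wtSub K d n) := by
  have := wtSet_finite d hd n
  exact Module.Finite.of_basis (basisRestrictSupport K (wtSet d n))

theorem mem_wtSub_one {K : Type} [Field K] {k : ℕ} (n : ℕ) (p : MvPolynomial (Fin k) K) :
    p ∈ wtSub K (fun _ : Fin k => 1) n ↔ p.totalDegree ≤ n := by
  rw [← mem_restrictTotalDegree]
  unfold wtSub restrictTotalDegree wtSet
  have : {a : Fin k →₀ ℕ | ∑ i, a i * 1 ≤ n} = {a | (a.sum fun _ e => e) ≤ n} := by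
    ext a
    simp [Finsupp.sum_fintype]
  rw [this]

theorem aeval_mono_hom {K : Type} [Field K] {k : ℕ} (f : Fin k → MvPolynomial (Fin k) K)
    (d : Fin k → ℕ) (hhom : ∀ i, (f i).IsHomogeneous (d i)) (a : Fin k →₀ ℕ) (r : K) :
    (aeval f (monomial a r)).IsHomogeneous (∑ i, a i * d i) := by
  rw [aeval_monomial, algebraMap_eq]
  refine IsHomogeneous.C_mul ?_ r
  rw [Finsupp.prod_fintype _ _ (by simp)]
  refine IsHomogeneous.prod _ _ _ fun i _ => ?_
  rw [mul_comm]
  exact (hhom i).pow (a i)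

theorem aeval_deg {K : Type} [Field K] {k : ℕ} (f : Fin k → MvPolynomial (Fin k) K)
    (d : Fin k → ℕ) (hhom : ∀ i, (f i).IsHomogeneous (d i)) (n : ℕ)
    (P : MvPolynomial (Fin k) K) (hP : P ∈ wtSub K d n) : (aeval f P).totalDegree ≤ n := by
  rw [P.as_sum, map_sum]
  refine totalDegree_finsetSum_le fun a ha => ?_
  exact (aeval_mono_hom f d hhom a _).totalDegree_le.trans
    (((mem_restrictSupport_iff K).1 hP) ha)

theorem comp_aeval {K : Type} [Field K] {k : ℕ} (f : Fin k → MvPolynomial (Fin k) K)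
    (d : Fin k → ℕ) (hhom : ∀ i, (f i).IsHomogeneous (d i)) (m : ℕ)
    (P : MvPolynomial (Fin k) K) :
    homogeneousComponent m (aeval f P) = aeval f (weightedHomogeneousComponent d m P) := by
  classical
  induction P using MvPolynomial.induction_on' with
  | add p q hp hq => simp only [map_add, hp, hq]
  | monomial a r =>
    have hw : Finsupp.weight d a = ∑ i, a i * d i := by
      simp [Finsupp.weight_apply, Finsupp.sum_fintype]
    rw [homogeneousComponent_of_mem (aeval_mono_hom f d hhom a r),
      weightedHomogeneousComponent_of_mem (isWeightedHomogeneous_monomial d a r hw)]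
    split_ifs <;> simp

theorem mem_of_aeval_deg {K : Type} [Field K] {k : ℕ} (f : Fin k → MvPolynomial (Fin k) K)
    (d : Fin k → ℕ) (hhom : ∀ i, (f i).IsHomogeneous (d i)) (hind : AlgebraicIndependent K f)
    (n : ℕ) (P : MvPolynomial (Fin k) K) (h : (aeval f P).totalDegree ≤ n) : P ∈ wtSub K d n := by
  classical
  rw [wtSub, mem_restrictSupport_iff]
  intro a ha
  by_contra hn
  simp only [wtSet, Set.mem_ofPred_eq, not_le] at hn
  have h1 := comp_aeval f d hhom (∑ i, a i * d i) P
  rw [homogeneousComponent_eq_zero _ _ (by omega)] at h1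
  have h2 := hind (h1.symm.trans (map_zero _).symm)
  have h3 := congrArg (coeff a) h2
  have hw : Finsupp.weight d a = ∑ i, a i * d i := by
    simp [Finsupp.weight_apply, Finsupp.sum_fintype]
  rw [coeff_weightedHomogeneousComponent, if_pos hw, coeff_zero] at h3
  exact (mem_support_iff.1 ha) h3

theorem polyAct_deg {K : Type} [Field K] {k : ℕ} (g : (Fin k → K) ≃ₗ[K] (Fin k → K))
    (p : MvPolynomial (Fin k) K) : (polyAct K k g p).totalDegree ≤ p.totalDegree := by
  refine aeval_deg _ (fun _ => 1) (fun i => ?_) _ p ((mem_wtSub_one _ _).2 le_rfl)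
  exact IsHomogeneous.sum _ _ _ fun j _ => isHomogeneous_C_mul_X _ _

theorem polyAct_one {K : Type} [Field K] {k : ℕ} : polyAct K k 1 = AlgHom.id K _ := by
  refine algHom_ext fun i => ?_
  have : ((1 : (Fin k → K) ≃ₗ[K] (Fin k → K)) : (Fin k → K) →ₗ[K] (Fin k → K)) =
    LinearMap.id := rfl
  simp only [polyAct, this, LinearMap.toMatrix_id, Matrix.one_apply, aeval_X, AlgHom.id_apply]
  rw [Finset.sum_eq_single i]
  · simp
  · intro j _ hj
    simp [hj]
  · simp

theorem polyAct_mul {K : Type} [Field K] {k : ℕ} (g h : (Fin k → K) ≃ₗ[K] (Fin k → K)) :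
    polyAct K k (g * h) = (polyAct K k g).comp (polyAct K k h) := by
  refine algHom_ext fun i => ?_
  have : ((g * h : (Fin k → K) ≃ₗ[K] (Fin k → K)) : (Fin k → K) →ₗ[K] (Fin k → K)) =
    (g : (Fin k → K) →ₗ[K] (Fin k → K)) ∘ₗ (h : (Fin k → K) →ₗ[K] (Fin k → K)) := rfl
  simp only [polyAct, AlgHom.comp_apply, aeval_X, map_sum, map_mul, this,
    LinearMap.toMatrix_comp (Pi.basisFun K (Fin k)) (Pi.basisFun K (Fin k)) (Pi.basisFun K (Fin k)),
    Matrix.mul_apply, aeval_C, algebraMap_eq, Finset.sum_mul, Finset.mul_sum]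
  rw [Finset.sum_comm]
  refine Finset.sum_congr rfl fun j _ => Finset.sum_congr rfl fun l _ => by ring

theorem polyAct_inj_s13 {K : Type} [Field K] {k : ℕ} (g h : (Fin k → K) ≃ₗ[K] (Fin k → K))
    (e : polyAct K k g = polyAct K k h) : g = h := by
  apply LinearEquiv.toLinearMap_injective
  apply (LinearMap.toMatrix (Pi.basisFun K (Fin k)) (Pi.basisFun K (Fin k))).injective
  ext j i
  have := congrArg (coeff (Finsupp.single j 1)) (DFunLike.congr_fun e (X i))
  simpa [polyAct, coeff_sum, coeff_C_mul, coeff_X, Finsupp.single_left_inj] using this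

theorem exists_det {S W : Type} [CommRing S] [IsDomain S] [Fintype W] [DecidableEq W]
    (φ : W → S →* S) (hφ : Function.Injective φ) :
    ∃ b : W → S, (Matrix.of fun w j => φ w (b j)).det ≠ 0 := by
  let L := FractionRing S
  have hinj : Function.Injective (algebraMap S L) := IsFractionRing.injective S L
  let ψ : W → S →* L := fun w => ((algebraMap S L : S →+* L) : S →* L).comp (φ w)
  have hψ : Function.Injective ψ := by
    intro w w' h
    apply hφ
    ext s
    exact hinj (DFunLike.congr_fun h s)
  have hli : LinearIndependent L (fun w => (ψ w : S → L)) :=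
    (linearIndependent_monoidHom S L).comp ψ hψ
  let v : S → W → L := fun s w => ψ w s
  have hspan : Submodule.span L (Set.range v) = ⊤ := by
    by_contra hne
    obtain ⟨F, hF0, hF⟩ := Submodule.exists_le_ker_of_lt_top _ (lt_top_iff_ne_top.2 hne)
    apply hF0
    have hz := Fintype.linearIndependent_iff.1 hli (fun w => F (Pi.single w 1)) (by
      ext s
      have h1 : F (v s) = 0 := hF (Submodule.subset_span ⟨s, rfl⟩)
      rw [LinearMap.pi_apply_eq_sum_univ] at h1
      simp only [Finset.sum_apply, Pi.smul_apply, smul_eq_mul, Pi.zero_apply]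
      rw [← h1]
      refine Finset.sum_congr rfl fun w _ => ?_
      rw [smul_eq_mul, mul_comm]
      congr 2
      ext i
      simp [Pi.single_apply, eq_comm])
    refine LinearMap.pi_ext' fun w => LinearMap.ext_ring ?_
    simpa using hz w
  obtain ⟨g, hg1, -, hg3⟩ := Submodule.exists_fun_fin_finrank_span_eq L (Set.range v)
  have hcard : Fintype.card W = Module.finrank L (Submodule.span L (Set.range v)) := by
    rw [hspan, finrank_top, Module.finrank_fintype_fun_eq_card]
  let e : W ≃ Fin (Module.finrank L (Submodule.span L (Set.range v))) :=
    Fintype.equivFinOfCardEq hcard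
  choose b hb using hg1
  refine ⟨fun w => b (e w), fun hdet => ?_⟩
  have hu : IsUnit (Matrix.of fun w j => ψ w (b (e j)) : Matrix W W L) := by
    rw [← Matrix.linearIndependent_cols_iff_isUnit]
    have := hg3.comp e e.injective
    have he : g ∘ e = (Matrix.of fun w j => ψ w (b (e j)) : Matrix W W L).col := by
      funext j w
      exact (congrFun (hb (e j)) w).symm
    rw [← he]
    exact this
  rw [Matrix.isUnit_iff_isUnit_det] at hu
  apply hu.ne_zero
  have := congrArg (algebraMap S L) hdet
  rw [RingHom.map_det, map_zero] at this
  exact this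

theorem stmt13 {K : Type} [Field K] {W : Type} [Group W] [Finite W] (k : ℕ)
    (ρ : W →* ((Fin k → K) ≃ₗ[K] (Fin k → K)))
    (hfaithful : Function.Injective ρ)
    (f : Fin k → MvPolynomial (Fin k) K) (d : Fin k → ℕ)
    (hhom : ∀ i, (f i).IsHomogeneous (d i))
    (hind : AlgebraicIndependent K f)
    (hgen : (Algebra.adjoin K (Set.range f) : Set (MvPolynomial (Fin k) K)) =
      {p | ∀ w : W, polyAct K k (ρ w) p = p}) :
    ∏ i, d i = Nat.card W := by
  classical
  have := Fintype.ofFinite W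
  have hd : ∀ i, 0 < d i := by
    intro i
    by_contra h0
    have h1 : (f i).totalDegree = 0 := by
      have := (hhom i).totalDegree_le
      omega
    rw [totalDegree_eq_zero_iff_eq_C] at h1
    have h2 : aeval f (X i - C (coeff 0 (f i)) : MvPolynomial (Fin k) K) =
        aeval f (0 : MvPolynomial (Fin k) K) := by
      rw [map_sub, aeval_X, aeval_C, algebraMap_eq, ← h1]
      simp
    have h3 := congrArg (coeff (Finsupp.single i 1)) (hind h2)
    have h4 : (0 : Fin k →₀ ℕ) ≠ Finsupp.single i 1 := fun h => by
      have := DFunLike.congr_fun h i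
      simp at this
    simp [coeff_C, h4] at h3
  let A : W → MvPolynomial (Fin k) K →ₐ[K] MvPolynomial (Fin k) K := fun w => polyAct K k (ρ w)
  have hA1 : A 1 = AlgHom.id K _ := by simp only [A, map_one, polyAct_one]
  have hAmul : ∀ w w' p, A (w * w') p = A w (A w' p) := fun w w' p => by
    simp only [A, map_mul, polyAct_mul, AlgHom.comp_apply]
  have hAinj : Function.Injective A := fun w w' h => hfaithful (polyAct_inj_s13 _ _ h)
  have hAdeg : ∀ w p, (A w p).totalDegree ≤ p.totalDegree := fun w p => polyAct_deg _ p
  have hR : ∀ p, (∃ P : MvPolynomial (Fin k) K, aeval f P = p) ↔ ∀ w, A w p = p := by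
    intro p
    have := Set.ext_iff.1 hgen p
    rw [SetLike.mem_coe, Algebra.adjoin_range_eq_range_aeval] at this
    exact this
  obtain ⟨b, hb⟩ := exists_det (fun w : W => MonoidHomClass.toMonoidHom (A w)) (fun w w' h => hAinj (AlgHom.ext fun p => DFunLike.congr_fun h p))
  let c := ∑ w, (b w).totalDegree
  have hc : ∀ w, (b w).totalDegree ≤ c := fun w =>
    Finset.single_le_sum (f := fun w => (b w).totalDegree) (fun _ _ => Nat.zero_le _)
      (Finset.mem_univ w)
  -- first inequality
  have I1 : ∀ n, Nat.card W * Nat.card (wtSet d n) ≤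
      Nat.card (wtSet (fun _ : Fin k => 1) (n + c)) := by
    intro n
    have := finite_wtSub K d hd n
    have := finite_wtSub K (fun _ : Fin k => 1) (fun _ => one_pos) (n + c)
    rw [← finrank_wtSub K, ← finrank_wtSub K, Nat.card_eq_fintype_card, ← smul_eq_mul,
      ← Finset.card_univ, ← Finset.sum_const, ← Module.finrank_pi_fintype K]
    let F : (W → wtSub K d n) →ₗ[K] wtSub K (fun _ : Fin k => 1) (n + c) :=
      LinearMap.codRestrict _
        (∑ w, (LinearMap.mulRight K (b w)) ∘ₗ (aeval f).toLinearMap ∘ₗ (wtSub K d n).subtype ∘ₗ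
          LinearMap.proj w) (by
        intro P
        rw [mem_wtSub_one, LinearMap.sum_apply]
        refine totalDegree_finsetSum_le fun w _ => ?_
        exact (totalDegree_mul _ _).trans
          (add_le_add (aeval_deg f d hhom n _ (P w).2) (hc w)))
    refine LinearMap.finrank_le_finrank_of_injective (f := F) ?_
    rw [← LinearMap.ker_eq_bot, LinearMap.ker_eq_bot']
    intro P hP
    have h1 : ∑ w, aeval f (P w).1 * b w = 0 := by
      have := congrArg Subtype.val hP
      simpa [F, LinearMap.sum_apply] using this
    have h2 := Matrix.eq_zero_of_mulVec_eq_zero hb (v := fun w => aeval f (P w).1) (by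
      ext1 w
      have h3 := congrArg (A w) h1
      rw [map_sum, map_zero] at h3
      rw [Pi.zero_apply, ← h3]
      refine Finset.sum_congr rfl fun j _ => ?_
      rw [map_mul, (hR _).1 ⟨_, rfl⟩ w, mul_comm]
      rfl)
    ext1 w
    apply Subtype.ext
    exact hind ((congrFun h2 w).trans (map_zero (aeval f)).symm)
  have I2 : ∀ n, Nat.card (wtSet (fun _ : Fin k => 1) n) ≤
      Nat.card W * Nat.card (wtSet d (n + c)) := by
    intro n
    have := finite_wtSub K d hd (n + c)
    have := finite_wtSub K (fun _ : Fin k => 1) (fun _ => one_pos) n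
    have hfr : Module.finrank K (wtSub K d (n + c)) = Module.finrank K
        ((wtSub K d (n + c)).map (aeval f).toLinearMap) :=
      (LinearEquiv.finrank_eq (Submodule.equivMapOfInjective (aeval f).toLinearMap hind _))
    rw [← finrank_wtSub K, ← finrank_wtSub K, Nat.card_eq_fintype_card, ← smul_eq_mul,
      ← Finset.card_univ, ← Finset.sum_const, hfr, ← Module.finrank_pi_fintype K]
    let G : W → wtSub K (fun _ : Fin k => 1) n →ₗ[K]
        (wtSub K d (n + c)).map (aeval f).toLinearMap := fun j =>
      LinearMap.codRestrict _
        (∑ w, (A w).toLinearMap ∘ₗ (LinearMap.mulRight K (b j)) ∘ₗ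
          (wtSub K (fun _ : Fin k => 1) n).subtype) (by
        intro s
        have hs := (mem_wtSub_one n _).1 s.2
        have hinv : ∀ w', A w' (∑ w, A w (s.1 * b j)) = ∑ w, A w (s.1 * b j) := by
          intro w'
          rw [map_sum]
          simp only [← hAmul]
          exact Fintype.sum_equiv (Equiv.mulLeft w') _ _ (fun _ => rfl)
        obtain ⟨P, hP⟩ := (hR _).2 hinv
        refine ⟨P, ?_, ?_⟩
        · apply mem_of_aeval_deg f d hhom hind
          rw [hP]
          refine totalDegree_finsetSum_le fun w _ => (hAdeg w _).trans ?_
          exact (totalDegree_mul _ _).trans (add_le_add hs (hc j))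
        · simpa [LinearMap.sum_apply] using hP)
    refine LinearMap.finrank_le_finrank_of_injective (f := LinearMap.pi G) ?_
    rw [← LinearMap.ker_eq_bot, LinearMap.ker_eq_bot']
    intro s hs
    have h1 : ∀ j, ∑ w, A w s.1 * A w (b j) = 0 := by
      intro j
      have h5 : G j s = 0 := congrFun hs j
      have h6 : (G j s).1 = ∑ w, A w (s.1 * b j) := by
        simp only [G, LinearMap.codRestrict_apply, LinearMap.sum_apply]
        rfl
      rw [h5] at h6
      simp only [map_mul] at h6
      exact h6.symm
    have h2 := Matrix.eq_zero_of_vecMul_eq_zero hb (v := fun w => A w s.1) (by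
      ext1 j
      exact h1 j)
    have h3 := congrFun h2 1
    simp only [hA1] at h3
    exact Subtype.ext h3
  apply le_antisymm
  · refine growth_aux _ _ (∑ i, d i + c) k _ (wtSet_card_pos d hd) (wtSet_card_le d hd) fun n => ?_
    rw [← add_assoc]
    exact (comb2 d n).trans (I2 _)
  · refine growth_aux _ _ c k _ (wtSet_card_pos d hd) (wtSet_card_le d hd) fun n => ?_
    exact (I1 n).trans (comb1 d hd _)
end
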